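/- arXiv:1801.03237 — 5 statements merged into one kernel-verified Lean document; each statement's English description precedes it below -/
import Mathlib

section
/- For every initial state x₀ ∈ X, the value function produced by the backward dynamic programming recursion equals the optimal cost over all policies: J₀(x₀) = ⨅_{π} V^π₀(x₀), where the infimum is over all policies π. -/
open MeasureTheory
open scoped ENNReal

/-!
A policy's cost-to-go solves a backward recursion driven by the policy's own monotone one-stage
operators, and the value function is a subsolution of each such recursion; comparing the two
backwards in time gives `J ≤ V π`. Conversely, fix tolerances `0 < e k ≤ ε` with
`c k * e (k + 1) < e k`, where `c k` bounds the mass of the disturbance law at stage `k`. A policy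
choosing at each state a control that is optimal up to `e k - c k * e (k + 1)` makes `J + e` a
supersolution of its recursion, so the same comparison gives `V π ≤ J + e`.
-/

theorem le_of_backward_recursion {α : Type*} [Preorder α] {N : ℕ} {T : ℕ → α → α} {a b : ℕ → α}
    (hT : ∀ k < N, Monotone (T k)) (hN : a N ≤ b N)
    (ha : ∀ k < N, a k ≤ T k (a (k + 1))) (hb : ∀ k < N, T k (b (k + 1)) ≤ b k)
    {k : ℕ} (hk : k ≤ N) : a k ≤ b k := by
  induction hk using Nat.decreasingInduction with
  | self => exact hN
  | of_succ k hk ih => exact ((ha k hk).trans (hT k hk ih)).trans (hb k hk)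

section Tolerances

open scoped NNReal

theorem exists_le_forall_mul_succ_lt (c : ℕ → ℝ≥0) {ε : ℝ≥0} (hε : 0 < ε) :
    ∃ e : ℕ → ℝ≥0, ∀ k, e k ≤ ε ∧ c k * e (k + 1) < e k := by
  have pos_prod (k : ℕ) : 0 < ∏ i ∈ Finset.range k, (1 + c i)⁻¹ :=
    Finset.prod_pos fun i _ ↦ by positivity
  have prod_le_one (k : ℕ) : ∏ i ∈ Finset.range k, (1 + c i)⁻¹ ≤ 1 :=
    Finset.prod_le_one' fun i _ ↦ inv_le_one_of_one_le₀ le_self_add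
  have ratio_lt_one (k : ℕ) : c k * (1 + c k)⁻¹ < 1 := by
    rw [← div_eq_mul_inv, div_lt_one (by positivity)]
    exact lt_one_add (c k)
  refine ⟨fun k ↦ ε * ∏ i ∈ Finset.range k, (1 + c i)⁻¹,
    fun k ↦ ⟨mul_le_of_le_one_right' (prod_le_one k), ?_⟩⟩
  calc c k * (ε * ∏ i ∈ Finset.range (k + 1), (1 + c i)⁻¹)
      = (ε * ∏ i ∈ Finset.range k, (1 + c i)⁻¹) * (c k * (1 + c k)⁻¹) := by
        rw [Finset.prod_range_succ]; ring
    _ < ε * ∏ i ∈ Finset.range k, (1 + c i)⁻¹ :=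
        mul_lt_of_lt_one_right (mul_pos hε (pos_prod k)) (ratio_lt_one k)

theorem exists_add_le_iInf_add {ι : Type*} [Nonempty ι] (φ : ι → ℝ≥0∞) {a b : ℝ≥0∞}
    (hab : a < b) : ∃ i, φ i + a ≤ (⨅ j, φ j) + b := by
  rcases eq_or_ne (⨅ j, φ j) ∞ with htop | htop
  · simp only [htop, top_add, le_top, exists_const]
  · have hlt : ⨅ i, (φ i + a) < (⨅ j, φ j) + b := by
      rw [← ENNReal.iInf_add]
      exact ENNReal.add_lt_add_left htop hab
    obtain ⟨i, hi⟩ := iInf_lt_iff.1 hlt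
    exact ⟨i, hi.le⟩

end Tolerances

section DynamicProgramming

open scoped NNReal

variable {X U : Type*} {N : ℕ} {Q : ℕ → (X → ℝ≥0∞) → X → U → ℝ≥0∞} {gN : X → ℝ≥0∞}

/-- `J` is the value function of the dynamic program over the stages `0, …, N` with terminal cost
`gN`. The program is given abstractly: `Q k h x u` is the cost of using the control `u` in the
state `x` at stage `k` when the remaining cost is described by `h`. -/
structure IsValueFunction (N : ℕ) (Q : ℕ → (X → ℝ≥0∞) → X → U → ℝ≥0∞) (gN : X → ℝ≥0∞)
    (J : ℕ → X → ℝ≥0∞) : Prop where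
  terminal : ∀ x, J N x = gN x
  bellman : ∀ k < N, ∀ x, J k x = ⨅ u, Q k (J (k + 1)) x u

/-- `v` is the cost-to-go of the Markov policy `π` in the dynamic program described by `N`, `Q` and
`gN` as in `IsValueFunction`. -/
structure IsCostToGo (N : ℕ) (Q : ℕ → (X → ℝ≥0∞) → X → U → ℝ≥0∞) (gN : X → ℝ≥0∞)
    (π : ℕ → X → U) (v : ℕ → X → ℝ≥0∞) : Prop where
  terminal : ∀ x, v N x = gN x
  recursion : ∀ k < N, ∀ x, v k x = Q k (v (k + 1)) x (π k x)

namespace IsValueFunction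

variable {J : ℕ → X → ℝ≥0∞}

theorem le_costToGo (hJ : IsValueFunction N Q gN J) (hQ : ∀ k < N, Monotone (Q k))
    {π : ℕ → X → U} {v : ℕ → X → ℝ≥0∞} (hv : IsCostToGo N Q gN π v) {k : ℕ} (hk : k ≤ N) :
    J k ≤ v k := by
  refine le_of_backward_recursion (T := fun k h x ↦ Q k h x (π k x))
    (fun k hk _ _ hle x ↦ hQ k hk hle x (π k x)) (fun x ↦ ?_) (fun k hk x ↦ ?_)
    (fun k hk x ↦ (hv.recursion k hk x).ge) hk
  · exact (hJ.terminal x).trans_le (hv.terminal x).ge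
  · exact (hJ.bellman k hk x).trans_le (iInf_le _ (π k x))

theorem costToGo_le_add (hJ : IsValueFunction N Q gN J) (hQ : ∀ k < N, Monotone (Q k))
    {c e : ℕ → ℝ≥0∞}
    (hc : ∀ k < N, ∀ h a x u, Q k (fun y ↦ h y + a) x u ≤ Q k h x u + c k * a)
    {π : ℕ → X → U}
    (hπ : ∀ k < N, ∀ x, Q k (J (k + 1)) x (π k x) + c k * e (k + 1) ≤ J k x + e k)
    {v : ℕ → X → ℝ≥0∞} (hv : IsCostToGo N Q gN π v) {k : ℕ} (hk : k ≤ N) (x : X) :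
    v k x ≤ J k x + e k := by
  refine le_of_backward_recursion (T := fun k h x ↦ Q k h x (π k x)) (b := fun k x ↦ J k x + e k)
    (fun k hk _ _ hle x ↦ hQ k hk hle x (π k x)) (fun x ↦ ?_)
    (fun k hk x ↦ (hv.recursion k hk x).le) (fun k hk x ↦ ?_) hk x
  · exact ((hv.terminal x).trans (hJ.terminal x).symm).trans_le le_self_add
  · exact (hc k hk _ _ x _).trans (hπ k hk x)

variable [Nonempty U]

theorem exists_policy_add_le (hJ : IsValueFunction N Q gN J) {c e : ℕ → ℝ≥0∞}
    (he : ∀ k < N, c k * e (k + 1) < e k) :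
    ∃ π : ℕ → X → U, ∀ k < N, ∀ x,
      Q k (J (k + 1)) x (π k x) + c k * e (k + 1) ≤ J k x + e k := by
  have exists_control (k : ℕ) (x : X) : ∃ u, k < N →
      Q k (J (k + 1)) x u + c k * e (k + 1) ≤ J k x + e k := by
    by_cases hk : k < N
    · obtain ⟨u, hu⟩ := exists_add_le_iInf_add (Q k (J (k + 1)) x) (he k hk)
      exact ⟨u, fun _ ↦ (hJ.bellman k hk x).symm ▸ hu⟩
    · exact ⟨Classical.arbitrary U, fun hlt ↦ absurd hlt hk⟩
  choose π hπ using exists_control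
  exact ⟨π, fun k hk x ↦ hπ k x hk⟩

theorem eq_iInf_costToGo (hJ : IsValueFunction N Q gN J) (hQ : ∀ k < N, Monotone (Q k))
    {c : ℕ → ℝ≥0}
    (hc : ∀ k < N, ∀ h a x u, Q k (fun y ↦ h y + a) x u ≤ Q k h x u + c k * a)
    {V : (ℕ → X → U) → ℕ → X → ℝ≥0∞} (hV : ∀ π, IsCostToGo N Q gN π (V π))
    {k : ℕ} (hk : k ≤ N) (x : X) : J k x = ⨅ π, V π k x := by
  refine le_antisymm (le_iInf fun π ↦ hJ.le_costToGo hQ (hV π) hk x)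
    (ENNReal.le_of_forall_pos_le_add fun ε hε _ ↦ ?_)
  obtain ⟨e, he⟩ := exists_le_forall_mul_succ_lt c hε
  obtain ⟨π, hπ⟩ := hJ.exists_policy_add_le (c := fun k ↦ c k) (e := fun k ↦ e k)
    fun k _ ↦ by exact_mod_cast (he k).2
  calc ⨅ π, V π k x
    _ ≤ V π k x := iInf_le _ π
    _ ≤ J k x + e k := hJ.costToGo_le_add hQ hc hπ (hV π) hk x
    _ ≤ J k x + ε := by gcongr; exact (he k).1

end IsValueFunction

end DynamicProgramming

section ExpectedCost

variable {X U W : Type*} [MeasurableSpace W]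

/-- The expected cost of using the control `u` in the state `x` and then paying `h` at the next
state (the Q-factor of `(x, u)`). The law `μ x u` of the disturbance may depend on the state and the
control; since `∫⁻` is the lower integral, the expected cost makes sense for arbitrary `f`, `g` and
`h`. -/
noncomputable def expectedCost (μ : X → U → Measure W) (f : X → U → W → X)
    (g : X → U → W → ℝ≥0∞) (h : X → ℝ≥0∞) (x : X) (u : U) : ℝ≥0∞ :=
  ∫⁻ w, (g x u w + h (f x u w)) ∂(μ x u)

variable {μ : X → U → Measure W} {f : X → U → W → X} {g : X → U → W → ℝ≥0∞}

theorem monotone_expectedCost : Monotone (expectedCost μ f g) :=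
  fun _ _ hle x u ↦ lintegral_mono fun w ↦ add_le_add_right (hle (f x u w)) (g x u w)

theorem expectedCost_add_const (h : X → ℝ≥0∞) (a : ℝ≥0∞) (x : X) (u : U) :
    expectedCost μ f g (fun y ↦ h y + a) x u = expectedCost μ f g h x u + μ x u Set.univ * a := by
  simp only [expectedCost, ← add_assoc]
  rw [lintegral_add_right _ measurable_const, lintegral_const, mul_comm]

end ExpectedCost

theorem dp_value_eq_inf_policy_cost_general
    {X U W : Type*} [MeasurableSpace W] [Nonempty U] (N : ℕ)
    (μ : ℕ → X → U → Measure W) (c : ℕ → NNReal) (hμ : ∀ k < N, ∀ x u, μ k x u Set.univ ≤ c k)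
    (f : ℕ → X → U → W → X) (g : ℕ → X → U → W → ℝ≥0∞) (gN : X → ℝ≥0∞)
    (J : ℕ → X → ℝ≥0∞) (hJN : ∀ x, J N x = gN x)
    (hJ : ∀ k < N, ∀ x, J k x = ⨅ u : U, ∫⁻ w, (g k x u w + J (k + 1) (f k x u w)) ∂(μ k x u))
    (V : (ℕ → X → U) → ℕ → X → ℝ≥0∞) (hVN : ∀ π x, V π N x = gN x)
    (hV : ∀ π, ∀ k < N, ∀ x,
      V π k x = ∫⁻ w, (g k x (π k x) w + V π (k + 1) (f k x (π k x) w)) ∂(μ k x (π k x)))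
    {k : ℕ} (hk : k ≤ N) (x : X) : J k x = ⨅ π, V π k x := by
  have value : IsValueFunction N (fun k ↦ expectedCost (μ k) (f k) (g k)) gN J := ⟨hJN, hJ⟩
  refine value.eq_iInf_costToGo (c := c) (fun _ _ ↦ monotone_expectedCost) (fun k hk h a x u ↦ ?_)
    (fun π ↦ ⟨hVN π, hV π⟩) hk x
  rw [expectedCost_add_const]
  gcongr
  exact hμ k hk x u

/-- For every initial state `x₀`, the value function produced by the
backward dynamic programming recursion equals the optimal cost over all policies:
`J 0 x₀ = ⨅ π, V π 0 x₀`. -/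
theorem dp_value_eq_inf_policy_cost
    {X U W : Type*} [MeasurableSpace X] [MeasurableSpace U] [MeasurableSpace W]
    [Nonempty U]
    (N : ℕ) (hN : 1 ≤ N)
    (μ : ℕ → Measure W) (hμ : ∀ k < N, IsProbabilityMeasure (μ k))
    (f : ℕ → X → U → W → X)
    (g : ℕ → X → U → W → ℝ≥0∞)
    (gN : X → ℝ≥0∞)
    (J : ℕ → X → ℝ≥0∞)
    (hJN : ∀ x, J N x = gN x)
    (hJ : ∀ k < N, ∀ x, J k x = ⨅ u : U, ∫⁻ w, (g k x u w + J (k + 1) (f k x u w)) ∂(μ k))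
    (V : (ℕ → X → U) → ℕ → X → ℝ≥0∞)
    (hVN : ∀ π : ℕ → X → U, ∀ x, V π N x = gN x)
    (hV : ∀ π : ℕ → X → U, ∀ k < N, ∀ x,
      V π k x = ∫⁻ w, (g k x (π k x) w + V π (k + 1) (f k x (π k x) w)) ∂(μ k))
    (hmeasJ : ∀ k < N, ∀ (x : X) (u : U),
      Measurable fun w => g k x u w + J (k + 1) (f k x u w))
    (hmeasV : ∀ π : ℕ → X → U, ∀ k < N, ∀ (x : X) (u : U),
      Measurable fun w => g k x u w + V π (k + 1) (f k x u w)) :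
    ∀ x₀ : X, J 0 x₀ = ⨅ π : ℕ → X → U, V π 0 x₀ := by
  intro x₀
  exact dp_value_eq_inf_policy_cost_general N (fun k _ _ ↦ μ k) 1
    (fun k hk _ _ ↦ by simp [(hμ k hk).measure_univ]) f g gN J hJN hJ V hVN hV N.zero_le x₀
end

section
/- If (φ, χ, ψ) is a symmetry of the system, then the value functions are invariant: J_k(φ(x)) = J_k(x) for all k = 0,…,N and all x ∈ X. -/
open MeasureTheory
open scoped ENNReal

section BellmanOperator

variable {X X' U U' W W' : Type*} [MeasurableSpace W] [MeasurableSpace W']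

/-- The Bellman operator of one stage with noise law `μ`, dynamics `f` and stage cost `g`: it sends
a cost-to-go `V` to the infimum over the controls of the expected cost of paying `g` and then `V` at
the next state. The infimum over an empty control space is `∞`, and `μ` may be any measure. -/
noncomputable def bellmanOperator (μ : Measure W) (f : X → U → W → X) (g : X → U → W → ℝ≥0∞)
    (V : X → ℝ≥0∞) (x : X) : ℝ≥0∞ :=
  ⨅ u, ∫⁻ w, (g x u w + V (f x u w)) ∂μ

theorem bellmanOperator_comp {μ : Measure W} {μ' : Measure W'}
    {f : X → U → W → X} {f' : X' → U' → W' → X'}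
    {g : X → U → W → ℝ≥0∞} {g' : X' → U' → W' → ℝ≥0∞} {V : X' → ℝ≥0∞}
    {φ : X → X'} {χ : U → U'} {ψ : W → W'}
    (hχ : Function.Surjective χ) (hψ : MeasurePreserving ψ μ μ')
    (hf : ∀ x u w, φ (f x u w) = f' (φ x) (χ u) (ψ w))
    (hg : ∀ x u w, g' (φ x) (χ u) (ψ w) = g x u w)
    (hmeas : ∀ x u, AEMeasurable (fun w ↦ g' x u w + V (f' x u w)) μ') :
    bellmanOperator μ' f' g' V ∘ φ = bellmanOperator μ f g (V ∘ φ) := by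
  obtain ⟨hψ, rfl⟩ := hψ
  funext x
  calc
    ⨅ u', ∫⁻ w', (g' (φ x) u' w' + V (f' (φ x) u' w')) ∂μ.map ψ
      = ⨅ u, ∫⁻ w', (g' (φ x) (χ u) w' + V (f' (φ x) (χ u) w')) ∂μ.map ψ :=
        (hχ.iInf_comp _).symm
    _ = ⨅ u, ∫⁻ w, (g' (φ x) (χ u) (ψ w) + V (f' (φ x) (χ u) (ψ w))) ∂μ :=
        iInf_congr fun u ↦ lintegral_map' (hmeas (φ x) (χ u)) hψ.aemeasurable
    _ = ⨅ u, ∫⁻ w, (g x u w + V (φ (f x u w))) ∂μ := by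
        simp only [hf, hg]

theorem value_function_invariant_under_symmetry_general {N : ℕ}
    {μ : ℕ → Measure W} {μ' : ℕ → Measure W'}
    {f : ℕ → X → U → W → X} {f' : ℕ → X' → U' → W' → X'}
    {g : ℕ → X → U → W → ℝ≥0∞} {g' : ℕ → X' → U' → W' → ℝ≥0∞}
    {J : ℕ → X → ℝ≥0∞} {J' : ℕ → X' → ℝ≥0∞}
    (hJ : ∀ k < N, ∀ x, J k x = bellmanOperator (μ k) (f k) (g k) (J (k + 1)) x)
    (hJ' : ∀ k < N, ∀ x, J' k x = bellmanOperator (μ' k) (f' k) (g' k) (J' (k + 1)) x)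
    {φ : X → X'} {χ : U → U'} {ψ : W → W'}
    (hχ : Function.Surjective χ) (hψ : ∀ k < N, MeasurePreserving ψ (μ k) (μ' k))
    (hf : ∀ k < N, ∀ x u w, φ (f k x u w) = f' k (φ x) (χ u) (ψ w))
    (hg : ∀ k < N, ∀ x u w, g' k (φ x) (χ u) (ψ w) = g k x u w)
    (hJN : ∀ x, J' N (φ x) = J N x)
    (hmeas : ∀ k < N, ∀ x u,
      AEMeasurable (fun w ↦ g' k x u w + J' (k + 1) (f' k x u w)) (μ' k)) :
    ∀ k ≤ N, ∀ x, J' k (φ x) = J k x := by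
  intro k hk
  induction hk using Nat.decreasingInduction with
  | self => exact hJN
  | of_succ k hk ih =>
    intro x
    have hnext : J' (k + 1) ∘ φ = J (k + 1) := funext ih
    calc
      J' k (φ x) = bellmanOperator (μ' k) (f' k) (g' k) (J' (k + 1)) (φ x) := hJ' k hk (φ x)
      _ = bellmanOperator (μ k) (f k) (g k) (J' (k + 1) ∘ φ) x :=
          congrFun (bellmanOperator_comp hχ (hψ k hk) (hf k hk) (hg k hk) (hmeas k hk)) x
      _ = bellmanOperator (μ k) (f k) (g k) (J (k + 1)) x := by rw [hnext]
      _ = J k x := (hJ k hk x).symm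

end BellmanOperator

/-- If `(φ, χ, ψ)` is a symmetry of the system, then the value
functions are invariant: `J k (φ x) = J k x` for all `k = 0, …, N` and all `x`. -/
theorem value_function_invariant_under_symmetry
    {X U W : Type*} [MeasurableSpace X] [MeasurableSpace U] [MeasurableSpace W]
    [Nonempty U]
    (N : ℕ) (hN : 1 ≤ N)
    (μ : ℕ → Measure W) (hμ : ∀ k < N, IsProbabilityMeasure (μ k))
    (f : ℕ → X → U → W → X)
    (g : ℕ → X → U → W → ℝ≥0∞)
    (gN : X → ℝ≥0∞)
    (J : ℕ → X → ℝ≥0∞)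
    (hJN : ∀ x, J N x = gN x)
    (hJ : ∀ k < N, ∀ x, J k x = ⨅ u : U, ∫⁻ w, (g k x u w + J (k + 1) (f k x u w)) ∂(μ k))
    (φ : X → X) (χ : U → U) (ψ : W → W)
    (hφ : Function.Bijective φ) (hχ : Function.Bijective χ) (hψ : Function.Bijective ψ)
    (hψmeas : Measurable ψ)
    (hf : ∀ k < N, ∀ (x : X) (u : U) (w : W), φ (f k x u w) = f k (φ x) (χ u) (ψ w))
    (hg : ∀ k < N, ∀ (x : X) (u : U) (w : W), g k (φ x) (χ u) (ψ w) = g k x u w)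
    (hgN : ∀ x, gN (φ x) = gN x)
    (hmap : ∀ k < N, Measure.map ψ (μ k) = μ k)
    (hmeasJ : ∀ k < N, ∀ (x : X) (u : U),
      Measurable fun w => g k x u w + J (k + 1) (f k x u w)) :
    ∀ k ≤ N, ∀ x : X, J k (φ x) = J k x :=
  value_function_invariant_under_symmetry_general hJ hJ hχ.surjective
    (fun k hk ↦ ⟨hψmeas, hmap k hk⟩) hf hg (fun x ↦ by rw [hJN, hJN, hgN])
    (fun k hk x u ↦ (hmeasJ k hk x u).aemeasurable)
end

section
/- Symmetry of optimal policies: let (φ, χ, ψ) be a symmetry of the system and π = (μ^π_0,…,μ^π_{N−1}) a policy. Define the conjugated policy π̃ by μ^{π̃}_k = χ ∘ μ^π_k ∘ φ⁻¹. Then the cost-to-go functions satisfy V^{π̃}_k(φ(x)) = V^π_k(x) for all k = 0,…,N and x ∈ X. In particular, if V^π_k = J_k for all k (π is optimal), then V^{π̃}_k = J_k for all k (π̃ is optimal). -/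
open MeasureTheory
open scoped ENNReal

/-!
The one-stage expected costs of two systems related by a morphism `(φ, χ, ψ)` are intertwined by
precomposition with `φ`, because `ψ` preserves the noise law. So the cost-to-go of the image policy,
precomposed with `φ`, satisfies the backward recursion of the original policy, whose solution is
unique. If the original policy is optimal, this common function also solves the Bellman recursion,
and surjectivity of `φ` and `χ` carries the Bellman recursion over to the target system.
-/

section BackwardRecursion

variable {α β : Type*}

/-- `v` solves the backward recursion `v N = a`, `v k = T k (v (k + 1))` for `k < N`. Both the
cost-to-go functions of a policy and the value functions are such solutions. The values of `v`
beyond `N` are unconstrained. -/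
structure IsBackwardSolution (T : ℕ → α → α) (N : ℕ) (a : α) (v : ℕ → α) : Prop where
  terminal : v N = a
  step : ∀ k < N, v k = T k (v (k + 1))

namespace IsBackwardSolution

variable {T : ℕ → α → α} {T' : ℕ → β → β} {N : ℕ} {a : α} {v w : ℕ → α} {p : α → β}

theorem unique (hv : IsBackwardSolution T N a v) (hw : IsBackwardSolution T N a w) :
    ∀ k ≤ N, v k = w k := by
  intro k hk
  induction hk using Nat.decreasingInduction with
  | self => rw [hv.terminal, hw.terminal]
  | of_succ k hk ih => rw [hv.step k hk, hw.step k hk, ih]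

theorem congr (hv : IsBackwardSolution T N a v) (h : ∀ k ≤ N, w k = v k) :
    IsBackwardSolution T N a w where
  terminal := (h N le_rfl).trans hv.terminal
  step k hk := by rw [h k hk.le, h (k + 1) hk, hv.step k hk]

theorem map (hv : IsBackwardSolution T N a v)
    (hp : ∀ k < N, p (T k (v (k + 1))) = T' k (p (v (k + 1)))) :
    IsBackwardSolution T' N (p a) fun k => p (v k) where
  terminal := congrArg p hv.terminal
  step k hk := by rw [hv.step k hk, hp k hk]

theorem of_map (hv : IsBackwardSolution T' N (p a) fun k => p (v k)) (hinj : p.Injective)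
    (hp : ∀ k < N, p (T k (v (k + 1))) = T' k (p (v (k + 1)))) :
    IsBackwardSolution T N a v where
  terminal := hinj hv.terminal
  step k hk := hinj ((hv.step k hk).trans (hp k hk).symm)

end IsBackwardSolution

end BackwardRecursion

/-- One stage `(μ_k, f_k, g_k)` of a stochastic control problem: the law of the disturbance, the
state update map and the stage cost. -/
structure ControlStage (X U W : Type*) [MeasurableSpace W] where
  noise : Measure W
  next : X → U → W → X
  cost : X → U → W → ℝ≥0∞

namespace ControlStage

variable {X U W X' U' W' : Type*} [MeasurableSpace W] [MeasurableSpace W']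

/-- The random total cost of applying control `u` in state `x` when the disturbance is `w` and
the subsequent costs are summarized by `h`. -/
def totalCost (S : ControlStage X U W) (h : X → ℝ≥0∞) (x : X) (u : U) (w : W) : ℝ≥0∞ :=
  S.cost x u w + h (S.next x u w)

/-- The Q-factor of the stage: the expectation of `totalCost` over the disturbance. It is a lower
integral, hence meaningful as an expectation only for measurable integrands. -/
noncomputable def qFactor (S : ControlStage X U W) (h : X → ℝ≥0∞) (x : X) (u : U) : ℝ≥0∞ :=
  ∫⁻ w, S.totalCost h x u w ∂S.noise

/-- The dynamic programming operator of the decision rule `π`; its backward solutions are the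
cost-to-go functions `V^π`. -/
noncomputable def policyOperator (S : ControlStage X U W) (π : X → U) (h : X → ℝ≥0∞) :
    X → ℝ≥0∞ :=
  fun x => S.qFactor h x (π x)

/-- The Bellman operator; its backward solutions are the value functions `J`. -/
noncomputable def bellmanOperator (S : ControlStage X U W) (h : X → ℝ≥0∞) : X → ℝ≥0∞ :=
  fun x => ⨅ u, S.qFactor h x u

/-- `(φ, χ, ψ)` is a morphism of stages: it commutes with the state update, and preserves the cost
and the law of the disturbance. A symmetry is a morphism from a stage to itself with bijective
components. -/
structure IsMorphism (S : ControlStage X U W) (S' : ControlStage X' U' W')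
    (φ : X → X') (χ : U → U') (ψ : W → W') : Prop where
  measurePreserving : MeasurePreserving ψ S.noise S'.noise
  map_next : ∀ x u w, φ (S.next x u w) = S'.next (φ x) (χ u) (ψ w)
  cost_map : ∀ x u w, S'.cost (φ x) (χ u) (ψ w) = S.cost x u w

namespace IsMorphism

variable {S : ControlStage X U W} {S' : ControlStage X' U' W'}
  {φ : X → X'} {χ : U → U'} {ψ : W → W'} {h : X' → ℝ≥0∞}

theorem totalCost_map (hS : S.IsMorphism S' φ χ ψ) (x : X) (u : U) (w : W) :
    S'.totalCost h (φ x) (χ u) (ψ w) = S.totalCost (h ∘ φ) x u w := by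
  simp only [totalCost, Function.comp_apply, hS.cost_map, hS.map_next]

theorem qFactor_map (hS : S.IsMorphism S' φ χ ψ) {x : X} {u : U}
    (hm : AEMeasurable (S'.totalCost h (φ x) (χ u)) S'.noise) :
    S'.qFactor h (φ x) (χ u) = S.qFactor (h ∘ φ) x u :=
  calc
    ∫⁻ w', S'.totalCost h (φ x) (χ u) w' ∂S'.noise
      = ∫⁻ w, S'.totalCost h (φ x) (χ u) (ψ w) ∂S.noise := by
        rw [← hS.measurePreserving.map_eq] at hm ⊢
        exact lintegral_map' hm hS.measurePreserving.aemeasurable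
    _ = ∫⁻ w, S.totalCost (h ∘ φ) x u w ∂S.noise :=
        lintegral_congr (hS.totalCost_map x u)

theorem policyOperator_comp (hS : S.IsMorphism S' φ χ ψ) {π : X → U} {π' : X' → U'}
    (hπ : π' ∘ φ = χ ∘ π)
    (hm : ∀ x, AEMeasurable (S'.totalCost h (φ x) (χ (π x))) S'.noise) :
    S'.policyOperator π' h ∘ φ = S.policyOperator π (h ∘ φ) := by
  funext x
  calc
    S'.qFactor h (φ x) (π' (φ x)) = S'.qFactor h (φ x) (χ (π x)) :=
      congrArg (S'.qFactor h (φ x)) (congrFun hπ x)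
    _ = S.qFactor (h ∘ φ) x (π x) := hS.qFactor_map (hm x)

theorem bellmanOperator_comp (hS : S.IsMorphism S' φ χ ψ) (hχ : χ.Surjective)
    (hm : ∀ x u, AEMeasurable (S'.totalCost h (φ x) (χ u)) S'.noise) :
    S'.bellmanOperator h ∘ φ = S.bellmanOperator (h ∘ φ) := by
  funext x
  calc
    ⨅ u', S'.qFactor h (φ x) u' = ⨅ u, S'.qFactor h (φ x) (χ u) := (hχ.iInf_comp _).symm
    _ = ⨅ u, S.qFactor (h ∘ φ) x u := iInf_congr fun u => hS.qFactor_map (hm x u)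

end IsMorphism

end ControlStage

section Symmetry

variable {X U W X' U' W' : Type*} [MeasurableSpace W] [MeasurableSpace W']
  {N : ℕ} {S : ℕ → ControlStage X U W} {S' : ℕ → ControlStage X' U' W'}
  {gN : X → ℝ≥0∞} {gN' : X' → ℝ≥0∞}
  {φ : X → X'} {χ : U → U'} {ψ : W → W'}
  {π : ℕ → X → U} {π' : ℕ → X' → U'}
  {V J : ℕ → X → ℝ≥0∞} {V' J' : ℕ → X' → ℝ≥0∞}

theorem costToGo_comp_eq_of_isMorphism
    (hS : ∀ k < N, (S k).IsMorphism (S' k) φ χ ψ) (hgN : gN' ∘ φ = gN)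
    (hπ : ∀ k < N, π' k ∘ φ = χ ∘ π k)
    (hV : IsBackwardSolution (fun k => (S k).policyOperator (π k)) N gN V)
    (hV' : IsBackwardSolution (fun k => (S' k).policyOperator (π' k)) N gN' V')
    (hm : ∀ k < N, ∀ x, AEMeasurable ((S' k).totalCost (V' (k + 1)) (φ x) (χ (π k x)))
      (S' k).noise) :
    ∀ k ≤ N, V' k ∘ φ = V k := by
  subst hgN
  have hpull : IsBackwardSolution (fun k => (S k).policyOperator (π k)) N (gN' ∘ φ)
      fun k => V' k ∘ φ :=
    hV'.map (p := (· ∘ φ)) fun k hk => (hS k hk).policyOperator_comp (hπ k hk) (hm k hk)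
  exact hpull.unique hV

theorem eq_valueFunction_of_isMorphism
    (hS : ∀ k < N, (S k).IsMorphism (S' k) φ χ ψ) (hgN : gN' ∘ φ = gN)
    (hφ : φ.Surjective) (hχ : χ.Surjective)
    (hJ : IsBackwardSolution (fun k => (S k).bellmanOperator) N gN J)
    (hJ' : IsBackwardSolution (fun k => (S' k).bellmanOperator) N gN' J')
    (hV' : ∀ k ≤ N, V' k ∘ φ = J k)
    (hm : ∀ k < N, ∀ x u, AEMeasurable ((S' k).totalCost (V' (k + 1)) (φ x) (χ u))
      (S' k).noise) :
    ∀ k ≤ N, V' k = J' k := by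
  subst hgN
  have hbellman : IsBackwardSolution (fun k => (S' k).bellmanOperator) N gN' V' :=
    (hJ.congr hV').of_map (p := (· ∘ φ)) hφ.injective_comp_right
      fun k hk => (hS k hk).bellmanOperator_comp hχ (hm k hk)
  exact hbellman.unique hJ'

theorem conjugated_policy_cost_and_optimality_general
    (hS : ∀ k < N, (S k).IsMorphism (S' k) φ χ ψ) (hgN : gN' ∘ φ = gN)
    (hφ : φ.Surjective) (hχ : χ.Surjective)
    (hπ : ∀ k < N, π' k ∘ φ = χ ∘ π k)
    (hV : IsBackwardSolution (fun k => (S k).policyOperator (π k)) N gN V)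
    (hV' : IsBackwardSolution (fun k => (S' k).policyOperator (π' k)) N gN' V')
    (hJ : IsBackwardSolution (fun k => (S k).bellmanOperator) N gN J)
    (hJ' : IsBackwardSolution (fun k => (S' k).bellmanOperator) N gN' J')
    (hm : ∀ k < N, ∀ x u, AEMeasurable ((S' k).totalCost (V' (k + 1)) x u) (S' k).noise) :
    (∀ k ≤ N, ∀ x, V' k (φ x) = V k x) ∧
      ((∀ k ≤ N, ∀ x, V k x = J k x) → ∀ k ≤ N, ∀ x, V' k x = J' k x) := by
  have hcost : ∀ k ≤ N, V' k ∘ φ = V k :=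
    costToGo_comp_eq_of_isMorphism hS hgN hπ hV hV' fun k hk x => hm k hk _ _
  refine ⟨fun k hk => congrFun (hcost k hk), fun hopt k hk => congrFun ?_⟩
  have hcost_opt : ∀ k ≤ N, V' k ∘ φ = J k := fun k hk => (hcost k hk).trans (funext (hopt k hk))
  exact eq_valueFunction_of_isMorphism hS hgN hφ hχ hJ hJ' hcost_opt
    (fun k hk x u => hm k hk _ _) k hk

end Symmetry

/-- Symmetry of optimal policies: if `(φ, χ, ψ)` is a symmetry of the
system and `π` a policy, then the conjugated policy `π̃` with `μ^{π̃}_k = χ ∘ μ^π_k ∘ φ⁻¹`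
satisfies `V^{π̃}_k (φ x) = V^π_k x` for all `k = 0, …, N` and `x`.  In particular, if
`π` is optimal (`V^π_k = J_k` for all `k`), then so is `π̃`. -/
theorem conjugated_policy_cost_and_optimality
    {X U W : Type*} [MeasurableSpace X] [MeasurableSpace U] [MeasurableSpace W]
    [Nonempty U]
    (N : ℕ) (hN : 1 ≤ N)
    (μ : ℕ → Measure W) (hμ : ∀ k < N, IsProbabilityMeasure (μ k))
    (f : ℕ → X → U → W → X)
    (g : ℕ → X → U → W → ℝ≥0∞)
    (gN : X → ℝ≥0∞)
    (J : ℕ → X → ℝ≥0∞)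
    (hJN : ∀ x, J N x = gN x)
    (hJ : ∀ k < N, ∀ x, J k x = ⨅ u : U, ∫⁻ w, (g k x u w + J (k + 1) (f k x u w)) ∂(μ k))
    (V : (ℕ → X → U) → ℕ → X → ℝ≥0∞)
    (hVN : ∀ π : ℕ → X → U, ∀ x, V π N x = gN x)
    (hV : ∀ π : ℕ → X → U, ∀ k < N, ∀ x,
      V π k x = ∫⁻ w, (g k x (π k x) w + V π (k + 1) (f k x (π k x) w)) ∂(μ k))
    (φ : X → X) (χ : U → U) (ψ : W → W)
    (hφ : Function.Bijective φ) (hχ : Function.Bijective χ) (hψ : Function.Bijective ψ)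
    (hψmeas : Measurable ψ)
    (hf : ∀ k < N, ∀ (x : X) (u : U) (w : W), φ (f k x u w) = f k (φ x) (χ u) (ψ w))
    (hg : ∀ k < N, ∀ (x : X) (u : U) (w : W), g k (φ x) (χ u) (ψ w) = g k x u w)
    (hgN : ∀ x, gN (φ x) = gN x)
    (hmap : ∀ k < N, Measure.map ψ (μ k) = μ k)
    (π : ℕ → X → U)
    (πt : ℕ → X → U)
    (hπt : ∀ k x, πt k x = χ (π k ((Equiv.ofBijective φ hφ).symm x)))
    (hmeasπ : ∀ k < N, ∀ (x : X) (u : U),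
      Measurable fun w => g k x u w + V π (k + 1) (f k x u w))
    (hmeasπt : ∀ k < N, ∀ (x : X) (u : U),
      Measurable fun w => g k x u w + V πt (k + 1) (f k x u w)) :
    (∀ k ≤ N, ∀ x : X, V πt k (φ x) = V π k x) ∧
      ((∀ k ≤ N, ∀ x : X, V π k x = J k x) → ∀ k ≤ N, ∀ x : X, V πt k x = J k x) := by
  let S : ℕ → ControlStage X U W := fun k => ⟨μ k, f k, g k⟩
  have hS : ∀ k < N, (S k).IsMorphism (S k) φ χ ψ := fun k hk =>
    ⟨⟨hψmeas, hmap k hk⟩, hf k hk, hg k hk⟩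
  have hconj : ∀ k, πt k ∘ φ = χ ∘ π k := fun k => funext fun x => by
    rw [Function.comp_apply, hπt, Equiv.ofBijective_symm_apply_apply, Function.comp_apply]
  have hV_sol (ρ : ℕ → X → U) :
      IsBackwardSolution (fun k => (S k).policyOperator (ρ k)) N gN (V ρ) :=
    ⟨funext (hVN ρ), fun k hk => funext (hV ρ k hk)⟩
  have hJ_sol : IsBackwardSolution (fun k => (S k).bellmanOperator) N gN J :=
    ⟨funext hJN, fun k hk => funext (hJ k hk)⟩
  exact conjugated_policy_cost_and_optimality_general hS (funext hgN) hφ.surjective hχ.surjective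
    (fun k _ => hconj k) (hV_sol π) (hV_sol πt) hJ_sol hJ_sol
    fun k hk x u => (hmeasπt k hk x u).aemeasurable
end

section
/- Lifting of optimal reduced policies: under the group-symmetry and moving-frame assumptions, let μ̄_k : Y → U for k < N, and suppose that for every k < N and every x in the image of s ∘ ρ, the control μ̄_k(ρ(x)) attains the dynamic-programming infimum at x, i.e. ∫⁻_W (g_k(x, μ̄_k(ρ(x)), w) + J_{k+1}(f_k(x, μ̄_k(ρ(x)), w))) dμ_k(w) = J_k(x). Then the lifted policy π defined by μ^π_k(x) := χ_{γ(x)⁻¹}(μ̄_k(ρ(x))) is optimal: its cost-to-go functions satisfy V^π_k(x) = J_k(x) for all k = 0,…,N and all x ∈ X. -/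
open MeasureTheory
open scoped ENNReal

/-!
Fix a symmetry `(φ, χ, ψ)`. Substituting `ψ w` for `w` in the integral defining a Q-factor shows
that, when the cost of the next stage is invariant, so is the Q-factor; taking infima over the
controls, the value functions are invariant by backward induction. At a state `x`, the frame element
`γ x` therefore carries the lifted control to the reduced control at `s (ρ x)` without changing its
Q-factor, so the lifted control attains the infimum at `x`. A policy that attains it everywhere
satisfies the same backward recursion as the value functions.

Each `ψ α` has the measurable inverse `ψ α⁻¹`, and composing with it matches the simple
functions below an integrand with those below its pullback, so the change of variables is exact for
every integrand.
-/

section GroupAction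

variable {G S : Type*} [Group G] {a : G → S → S}

theorem action_apply_inv_apply (one : a 1 = id) (mul : ∀ α β, a (α * β) = a α ∘ a β)
    (α : G) (p : S) : a α (a α⁻¹ p) = p := by
  rw [← Function.comp_apply (f := a α), ← mul, mul_inv_cancel, one, id]

theorem action_surjective (one : a 1 = id) (mul : ∀ α β, a (α * β) = a α ∘ a β) (α : G) :
    Function.Surjective (a α) :=
  fun p => ⟨a α⁻¹ p, action_apply_inv_apply one mul α p⟩

theorem action_measurableEmbedding [MeasurableSpace S] (one : a 1 = id)
    (mul : ∀ α β, a (α * β) = a α ∘ a β) (meas : ∀ α, Measurable (a α)) (α : G) :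
    MeasurableEmbedding (a α) := by
  have leftInverse : Function.LeftInverse (a α⁻¹) (a α) := fun p => by
    simpa only [inv_inv] using action_apply_inv_apply one mul α⁻¹ p
  have measurableSet_range : MeasurableSet (Set.range (a α)) := by
    simp only [(action_surjective one mul α).range_eq, MeasurableSet.univ]
  exact .of_measurable_inverse (meas α) measurableSet_range (meas α⁻¹) leftInverse

end GroupAction

/-- The data of a finite-horizon stochastic control problem with states `X`, controls `U` and
disturbances `W`. Sequences are indexed by all of `ℕ`; only their terms before `horizon` matter. -/
structure ControlProblem (X U W : Type*) [MeasurableSpace W] where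
  horizon : ℕ
  noise : ℕ → Measure W
  dynamics : ℕ → X → U → W → X
  stageCost : ℕ → X → U → W → ℝ≥0∞
  terminalCost : X → ℝ≥0∞

/-- The policy `μ^π_k(x) = χ_{γ(x)⁻¹}(μ̄_k(ρ(x)))` induced on the full state space by a reduced
policy `μbar`. -/
def liftedPolicy {X Y U G : Type*} [Inv G] (χ : G → U → U) (γ : X → G) (ρ : X → Y)
    (μbar : ℕ → Y → U) (k : ℕ) (x : X) : U :=
  χ (γ x)⁻¹ (μbar k (ρ x))

namespace ControlProblem

variable {X U W : Type*} [MeasurableSpace W]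

/-- The Q-factor of the control `u` at the state `x`: the expected cost of applying `u` at stage `k`
when the cost of continuing from stage `k + 1` is `C`. -/
noncomputable def qFactor (P : ControlProblem X U W) (k : ℕ) (C : X → ℝ≥0∞) (x : X) (u : U) :
    ℝ≥0∞ :=
  ∫⁻ w, (P.stageCost k x u w + C (P.dynamics k x u w)) ∂(P.noise k)

/-- `J` solves the dynamic-programming recursion. It is unconstrained after the horizon. -/
structure IsValueFunction (P : ControlProblem X U W) (J : ℕ → X → ℝ≥0∞) : Prop where
  terminal : ∀ x, J P.horizon x = P.terminalCost x
  bellman : ∀ k < P.horizon, ∀ x, J k x = ⨅ u, P.qFactor k (J (k + 1)) x u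

/-- `V` is the cost-to-go of the policy `π`. It is unconstrained after the horizon. -/
structure IsCostToGo (P : ControlProblem X U W) (π : ℕ → X → U) (V : ℕ → X → ℝ≥0∞) : Prop where
  terminal : ∀ x, V P.horizon x = P.terminalCost x
  step : ∀ k < P.horizon, ∀ x, V k x = P.qFactor k (V (k + 1)) x (π k x)

/-- The transformations `φ`, `χ`, `ψ` of states, controls and disturbances preserve the problem.
Choosing `ψ` to be a measurable embedding makes `∫⁻ w, F w ∂(map ψ μ) = ∫⁻ w, F (ψ w) ∂μ` hold for
every `F : W → ℝ≥0∞`. -/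
structure IsSymmetry (P : ControlProblem X U W) (φ : X → X) (χ : U → U) (ψ : W → W) : Prop where
  map_dynamics : ∀ k < P.horizon, ∀ x u w,
    φ (P.dynamics k x u w) = P.dynamics k (φ x) (χ u) (ψ w)
  stageCost_eq : ∀ k < P.horizon, ∀ x u w,
    P.stageCost k (φ x) (χ u) (ψ w) = P.stageCost k x u w
  terminalCost_eq : ∀ x, P.terminalCost (φ x) = P.terminalCost x
  measurableEmbedding : MeasurableEmbedding ψ
  map_noise : ∀ k < P.horizon, Measure.map ψ (P.noise k) = P.noise k

variable {P : ControlProblem X U W} {φ : X → X} {χ : U → U} {ψ : W → W}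
  {J V V' : ℕ → X → ℝ≥0∞} {π : ℕ → X → U} {k : ℕ}

theorem IsSymmetry.qFactor_eq (h : P.IsSymmetry φ χ ψ) (hk : k < P.horizon) {C : X → ℝ≥0∞}
    (hC : ∀ x, C (φ x) = C x) (x : X) (u : U) :
    P.qFactor k C (φ x) (χ u) = P.qFactor k C x u :=
  calc P.qFactor k C (φ x) (χ u)
    _ = ∫⁻ w, (P.stageCost k (φ x) (χ u) w + C (P.dynamics k (φ x) (χ u) w))
          ∂(Measure.map ψ (P.noise k)) := by rw [h.map_noise k hk, qFactor]
    _ = ∫⁻ w, (P.stageCost k (φ x) (χ u) (ψ w) + C (P.dynamics k (φ x) (χ u) (ψ w)))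
          ∂(P.noise k) := h.measurableEmbedding.lintegral_map _
    _ = P.qFactor k C x u := lintegral_congr fun w => by
          rw [h.stageCost_eq k hk, ← h.map_dynamics k hk, hC]

theorem IsValueFunction.apply_symmetry (hJ : P.IsValueFunction J) (h : P.IsSymmetry φ χ ψ)
    (hχ : Function.Surjective χ) (hk : k ≤ P.horizon) (x : X) : J k (φ x) = J k x := by
  induction hk using Nat.decreasingInduction generalizing x with
  | self => rw [hJ.terminal, hJ.terminal, h.terminalCost_eq]
  | of_succ k hk ih =>
    calc J k (φ x)
      _ = ⨅ u, P.qFactor k (J (k + 1)) (φ x) u := hJ.bellman k hk (φ x)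
      _ = ⨅ u, P.qFactor k (J (k + 1)) (φ x) (χ u) := (hχ.iInf_comp _).symm
      _ = ⨅ u, P.qFactor k (J (k + 1)) x u := iInf_congr (h.qFactor_eq hk ih x)
      _ = J k x := (hJ.bellman k hk x).symm

theorem IsValueFunction.qFactor_eq_iff_of_symmetry (hJ : P.IsValueFunction J)
    (h : P.IsSymmetry φ χ ψ) (hχ : Function.Surjective χ) (hk : k < P.horizon) (x : X) (u : U) :
    P.qFactor k (J (k + 1)) (φ x) (χ u) = J k (φ x) ↔ P.qFactor k (J (k + 1)) x u = J k x := by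
  rw [h.qFactor_eq hk (hJ.apply_symmetry h hχ hk), hJ.apply_symmetry h hχ hk.le]

theorem IsCostToGo.unique (hV : P.IsCostToGo π V) (hV' : P.IsCostToGo π V')
    (hk : k ≤ P.horizon) : V k = V' k := by
  induction hk using Nat.decreasingInduction with
  | self => exact funext fun x => (hV.terminal x).trans (hV'.terminal x).symm
  | of_succ k hk ih => exact funext fun x => by rw [hV.step k hk, hV'.step k hk, ih]

theorem IsValueFunction.isCostToGo_liftedPolicy (hJ : P.IsValueFunction J)
    {G Y : Type*} [Group G] {φ : G → X → X} {χ : G → U → U} {ψ : G → W → W}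
    (hχe : χ 1 = id) (hχmul : ∀ α β, χ (α * β) = χ α ∘ χ β)
    (hsymm : ∀ α, P.IsSymmetry (φ α) (χ α) (ψ α))
    {ρ : X → Y} (hρ : ∀ α x, ρ (φ α x) = ρ x)
    {s : Y → X} {γ : X → G} (hframe : ∀ x, φ (γ x) x = s (ρ x))
    {μbar : ℕ → Y → U}
    (hopt : ∀ k < P.horizon, ∀ x ∈ Set.range (s ∘ ρ),
      P.qFactor k (J (k + 1)) x (μbar k (ρ x)) = J k x) :
    P.IsCostToGo (liftedPolicy χ γ ρ μbar) J where
  terminal := hJ.terminal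
  step k hk x := by
    have optimal_on_slice := hopt k hk (φ (γ x) x) ⟨x, (hframe x).symm⟩
    have transport : χ (γ x) (liftedPolicy χ γ ρ μbar k x) = μbar k (ρ x) :=
      action_apply_inv_apply hχe hχmul (γ x) _
    rw [hρ, ← transport] at optimal_on_slice
    have χ_surjective := action_surjective hχe hχmul (γ x)
    exact ((hJ.qFactor_eq_iff_of_symmetry (hsymm (γ x)) χ_surjective hk x _).mp
      optimal_on_slice).symm

end ControlProblem

theorem lifted_reduced_policy_is_optimal_general
    {X U W G Y : Type*} [MeasurableSpace W] [Group G]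
    {P : ControlProblem X U W} {J V : ℕ → X → ℝ≥0∞} (hJ : P.IsValueFunction J)
    {φ : G → X → X} {χ : G → U → U} {ψ : G → W → W}
    (hχe : χ 1 = id) (hχmul : ∀ α β, χ (α * β) = χ α ∘ χ β)
    (hsymm : ∀ α, P.IsSymmetry (φ α) (χ α) (ψ α))
    {ρ : X → Y} (hρ : ∀ α x, ρ (φ α x) = ρ x)
    {s : Y → X} {γ : X → G} (hframe : ∀ x, φ (γ x) x = s (ρ x))
    {μbar : ℕ → Y → U}
    (hopt : ∀ k < P.horizon, ∀ x ∈ Set.range (s ∘ ρ),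
      P.qFactor k (J (k + 1)) x (μbar k (ρ x)) = J k x)
    (hV : P.IsCostToGo (liftedPolicy χ γ ρ μbar) V) :
    ∀ k ≤ P.horizon, ∀ x, V k x = J k x :=
  fun _ hk => congrFun <|
    hV.unique (hJ.isCostToGo_liftedPolicy hχe hχmul hsymm hρ hframe hopt) hk

/-- Lifting of optimal reduced policies: under the group-symmetry and
moving-frame assumptions, if the reduced controls `μ̄ k (ρ x)` attain the
dynamic-programming infimum at every point `x` of the image of `s ∘ ρ`, then the lifted
policy `μ^π_k (x) := χ_{γ(x)⁻¹} (μ̄ k (ρ x))` is optimal: `V^π_k = J_k` everywhere. -/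
theorem lifted_reduced_policy_is_optimal
    {X U W : Type*} [MeasurableSpace X] [MeasurableSpace U] [MeasurableSpace W]
    [Nonempty U]
    (N : ℕ) (hN : 1 ≤ N)
    (μ : ℕ → Measure W) (hμ : ∀ k < N, IsProbabilityMeasure (μ k))
    (f : ℕ → X → U → W → X)
    (g : ℕ → X → U → W → ℝ≥0∞)
    (gN : X → ℝ≥0∞)
    (J : ℕ → X → ℝ≥0∞)
    (hJN : ∀ x, J N x = gN x)
    (hJ : ∀ k < N, ∀ x, J k x = ⨅ u : U, ∫⁻ w, (g k x u w + J (k + 1) (f k x u w)) ∂(μ k))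
    -- group symmetry
    (G : Type*) [Group G]
    (φ : G → X → X) (χ : G → U → U) (ψ : G → W → W)
    (hχbij : ∀ α : G, Function.Bijective (χ α))
    (hψbij : ∀ α : G, Function.Bijective (ψ α))
    (hψmeas : ∀ α : G, Measurable (ψ α))
    (hφe : φ 1 = id) (hφmul : ∀ α β : G, φ (α * β) = φ α ∘ φ β)
    (hχe : χ 1 = id) (hχmul : ∀ α β : G, χ (α * β) = χ α ∘ χ β)
    (hψe : ψ 1 = id) (hψmul : ∀ α β : G, ψ (α * β) = ψ α ∘ ψ β)
    (hf : ∀ α : G, ∀ k < N, ∀ (x : X) (u : U) (w : W),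
      φ α (f k x u w) = f k (φ α x) (χ α u) (ψ α w))
    (hg : ∀ α : G, ∀ k < N, ∀ (x : X) (u : U) (w : W),
      g k (φ α x) (χ α u) (ψ α w) = g k x u w)
    (hgN : ∀ (α : G) (x : X), gN (φ α x) = gN x)
    (hmap : ∀ α : G, ∀ k < N, Measure.map (ψ α) (μ k) = μ k)
    -- moving frame
    (Y : Type*) (ρ : X → Y)
    (hρ : ∀ (α : G) (x : X), ρ (φ α x) = ρ x)
    (s : Y → X) (γ : X → G)
    (hframe : ∀ x : X, φ (γ x) x = s (ρ x))
    -- policies and their cost-to-go functions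
    (V : (ℕ → X → U) → ℕ → X → ℝ≥0∞)
    (hVN : ∀ π : ℕ → X → U, ∀ x, V π N x = gN x)
    (hV : ∀ π : ℕ → X → U, ∀ k < N, ∀ x,
      V π k x = ∫⁻ w, (g k x (π k x) w + V π (k + 1) (f k x (π k x) w)) ∂(μ k))
    -- an optimal reduced policy
    (μbar : ℕ → Y → U)
    (hopt : ∀ k < N, ∀ x ∈ Set.range (s ∘ ρ),
      ∫⁻ w, (g k x (μbar k (ρ x)) w + J (k + 1) (f k x (μbar k (ρ x)) w)) ∂(μ k) = J k x)
    -- the lifted policy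
    (π : ℕ → X → U)
    (hπ : ∀ k x, π k x = χ (γ x)⁻¹ (μbar k (ρ x)))
    -- measurability
    (hmeasJ : ∀ k < N, ∀ (x : X) (u : U),
      Measurable fun w => g k x u w + J (k + 1) (f k x u w))
    (hmeasV : ∀ k < N, ∀ (x : X) (u : U),
      Measurable fun w => g k x u w + V π (k + 1) (f k x u w)) :
    ∀ k ≤ N, ∀ x : X, V π k x = J k x := by
  obtain rfl : π = liftedPolicy χ γ ρ μbar := funext₂ hπ
  exact lifted_reduced_policy_is_optimal_general (P := ⟨N, μ, f, g, gN⟩) ⟨hJN, hJ⟩ hχe hχmul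
    (fun α => ⟨hf α, hg α, hgN α, action_measurableEmbedding hψe hψmul hψmeas α, hmap α⟩)
    hρ hframe hopt ⟨hVN _, hV _⟩
end

section
/- Rotational symmetry of the MR fingerprinting model: fix real parameters θ₁, θ₂, γ > 0. For x ∈ ℝ⁶ and a 3×3 real matrix U, define f(x,U) = blockdiag(U,U)·D·x + b, where D is the 6×6 matrix with rows (θ₂,0,0,0,0,0), (0,θ₂,0,0,0,0), (0,0,θ₁,0,0,0), (0,0,0,θ₂,0,0), (0,0,0,0,θ₂,0), (0,0,1,0,0,θ₁), and b = (0,0,1−θ₁,0,0,−1)ᵀ; define g(x) = (1/γ)(x₄² + x₅²). For α ∈ ℝ let R_α be the 3×3 rotation [[cos α, −sin α, 0],[sin α, cos α, 0],[0,0,1]] and let Φ_α = blockdiag(R_α, R_α) acting on ℝ⁶. Then for all α ∈ ℝ, x ∈ ℝ⁶ and all 3×3 matrices U: f(Φ_α x, R_α U R_α⁻¹) = Φ_α f(x,U), and g(Φ_α x) = g(x). -/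
open Matrix

/-- The 6×6 block-diagonal matrix `blockdiag(U, U)` with two copies of the 3×3 matrix
`U` on the diagonal. -/
def blockDiag2 (U : Matrix (Fin 3) (Fin 3) ℝ) : Matrix (Fin 6) (Fin 6) ℝ :=
  Matrix.reindex finSumFinEquiv finSumFinEquiv (Matrix.fromBlocks U 0 0 U)

/-- The decay matrix `D` of the MR fingerprinting model. -/
def mriD (θ₁ θ₂ : ℝ) : Matrix (Fin 6) (Fin 6) ℝ :=
  !![θ₂, 0, 0, 0, 0, 0;
     0, θ₂, 0, 0, 0, 0;
     0, 0, θ₁, 0, 0, 0;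
     0, 0, 0, θ₂, 0, 0;
     0, 0, 0, 0, θ₂, 0;
     0, 0, 1, 0, 0, θ₁]

/-- The affine offset `b` of the MR fingerprinting model. -/
def mriB (θ₁ : ℝ) : Fin 6 → ℝ := ![0, 0, 1 - θ₁, 0, 0, -1]

/-- The state update `f(x, U) = blockdiag(U, U) · D · x + b` of the MR fingerprinting
model. -/
def mriF (θ₁ θ₂ : ℝ) (x : Fin 6 → ℝ) (U : Matrix (Fin 3) (Fin 3) ℝ) : Fin 6 → ℝ :=
  (blockDiag2 U * mriD θ₁ θ₂).mulVec x + mriB θ₁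

/-- The stage reward `g(x) = (1/γ) (x₄² + x₅²)` of the MR fingerprinting model (using
1-based coordinates as in the paper). -/
noncomputable def mriG (γ : ℝ) (x : Fin 6 → ℝ) : ℝ := 1 / γ * (x 3 ^ 2 + x 4 ^ 2)

/-- The rotation `R_α` about the third axis. -/
noncomputable def rotZ (α : ℝ) : Matrix (Fin 3) (Fin 3) ℝ :=
  !![Real.cos α, -Real.sin α, 0;
     Real.sin α,  Real.cos α, 0;
     0, 0, 1]

/-- The block rotation `Φ_α = blockdiag(R_α, R_α)` acting on `ℝ⁶`. -/
noncomputable def mriPhi (α : ℝ) : Matrix (Fin 6) (Fin 6) ℝ := blockDiag2 (rotZ α)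

/-!
Write `e` for the third basis vector of `ℝ³`. In `3 × 3` blocks, the matrix `D` is built from the
identity and the rank-one matrix `e eᵀ`, and `b = ((1 - θ₁) e, -e)`. A matrix `S` with `S e = e` and
`eᵀ S = eᵀ` commutes with `e eᵀ`, so `blockdiag(S, S)` commutes with `D` and fixes `b`; this makes
`f` equivariant. The reward is `γ⁻¹ (|w|² - (eᵀ w)²)`, where `w` is the second half of the state, so
it is invariant if `S` is moreover orthogonal. For orthogonal `S`, the condition `eᵀ S = eᵀ` follows
from `S e = e`, so every orthogonal matrix fixing `e`, in particular `R_α`, is a symmetry.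
-/

/-- The direction of the third axis of `ℝ³`, about which `rotZ` rotates. -/
def zAxis : Fin 3 → ℝ := ![0, 0, 1]

section General

theorem append_eq_sumElim_comp {k l : ℕ} {α : Type*} (v : Fin k → α) (w : Fin l → α) :
    Fin.append v w = Sum.elim v w ∘ finSumFinEquiv.symm := by
  rw [← Fin.append_comp_sumElim, Function.comp_assoc]
  ext i
  cases i using Fin.addCases <;> simp

variable {n R : Type*} [Fintype n]

theorem commute_fromBlocks_of_commute [NonUnitalNonAssocSemiring R] {S A B C D : Matrix n n R}
    (hA : Commute S A) (hB : Commute S B) (hC : Commute S C) (hD : Commute S D) :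
    Commute (fromBlocks S 0 0 S) (fromBlocks A B C D) := by
  simp [Commute, SemiconjBy, fromBlocks_multiply, hA.eq, hB.eq, hC.eq, hD.eq]

theorem commute_vecMulVec_of_mulVec_eq_of_vecMul_eq [NonUnitalSemiring R] {S : Matrix n n R}
    {v w : n → R} (hv : S *ᵥ v = v) (hw : w ᵥ* S = w) : Commute S (vecMulVec v w) := by
  rw [Commute, SemiconjBy, mul_vecMulVec, vecMulVec_mul, hv, hw]

variable [DecidableEq n] [CommRing R] {S : Matrix n n R}

theorem vecMul_mulVec_of_mem_orthogonalGroup (hS : S ∈ orthogonalGroup n R) (v : n → R) :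
    (S *ᵥ v) ᵥ* S = v := by
  rw [vecMul_mulVec, (mem_orthogonalGroup_iff' n R).mp hS, vecMul_one]

theorem mulVec_dotProduct_mulVec_of_mem_orthogonalGroup (hS : S ∈ orthogonalGroup n R)
    (v w : n → R) : (S *ᵥ v) ⬝ᵥ (S *ᵥ w) = v ⬝ᵥ w := by
  rw [dotProduct_mulVec, vecMul_mulVec_of_mem_orthogonalGroup hS]

theorem vecMul_eq_self_of_mem_orthogonalGroup (hS : S ∈ orthogonalGroup n R) {v : n → R}
    (hv : S *ᵥ v = v) : v ᵥ* S = v := by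
  simpa only [hv] using vecMul_mulVec_of_mem_orthogonalGroup hS v

end General

theorem blockDiag2_mul (A B : Matrix (Fin 3) (Fin 3) ℝ) :
    blockDiag2 (A * B) = blockDiag2 A * blockDiag2 B := by
  simp [blockDiag2, submatrix_mul_equiv, fromBlocks_multiply]

theorem blockDiag2_mulVec_append (U : Matrix (Fin 3) (Fin 3) ℝ) (v w : Fin 3 → ℝ) :
    blockDiag2 U *ᵥ Fin.append v w = Fin.append (U *ᵥ v) (U *ᵥ w) := by
  rw [append_eq_sumElim_comp, append_eq_sumElim_comp, blockDiag2, reindex_apply,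
    submatrix_mulVec_equiv, fromBlocks_mulVec]
  simp [Function.comp_assoc]

/-- The matrix that scales `zAxis` by `c` and the plane orthogonal to it by `a`, that is,
`diag(a, a, c)`; written without coordinates, since only `zAxis` enters the commutation argument. -/
def axialScaling (a c : ℝ) : Matrix (Fin 3) (Fin 3) ℝ :=
  a • 1 + (c - a) • vecMulVec zAxis zAxis

theorem mriD_eq_fromBlocks (θ₁ θ₂ : ℝ) :
    mriD θ₁ θ₂ = reindex finSumFinEquiv finSumFinEquiv
      (fromBlocks (axialScaling θ₂ θ₁) 0 (vecMulVec zAxis zAxis) (axialScaling θ₂ θ₁)) := by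
  ext i j
  fin_cases i <;> fin_cases j <;>
    simp [mriD, axialScaling, zAxis, vecMulVec, finSumFinEquiv, Fin.addCases]

theorem mriB_eq_append (θ₁ : ℝ) :
    mriB θ₁ = Fin.append ((1 - θ₁) • zAxis) (-zAxis) := by
  ext i
  fin_cases i <;> simp [mriB, zAxis, Fin.append, Fin.addCases]

theorem mriG_append (γ : ℝ) (v w : Fin 3 → ℝ) :
    mriG γ (Fin.append v w) = 1 / γ * (w ⬝ᵥ w - (zAxis ⬝ᵥ w) ^ 2) := by
  have hx (i) : (Fin.append v w : Fin 6 → ℝ) (Fin.natAdd 3 i) = w i := Fin.append_right v w i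
  have h3 : (Fin.append v w : Fin 6 → ℝ) 3 = w 0 := hx 0
  have h4 : (Fin.append v w : Fin 6 → ℝ) 4 = w 1 := hx 1
  simp only [mriG, h3, h4, zAxis, vec3_dotProduct, cons_val]
  ring

section Symmetry

variable {S : Matrix (Fin 3) (Fin 3) ℝ}

theorem commute_axialScaling (a c : ℝ) (hP : Commute S (vecMulVec zAxis zAxis)) :
    Commute S (axialScaling a c) :=
  ((Commute.one_right S).smul_right a).add_right (hP.smul_right (c - a))

theorem commute_blockDiag2_mriD (θ₁ θ₂ : ℝ) (hv : S *ᵥ zAxis = zAxis)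
    (hw : zAxis ᵥ* S = zAxis) : Commute (blockDiag2 S) (mriD θ₁ θ₂) := by
  have hP : Commute S (vecMulVec zAxis zAxis) :=
    commute_vecMulVec_of_mulVec_eq_of_vecMul_eq hv hw
  have hA : Commute S (axialScaling θ₂ θ₁) := commute_axialScaling θ₂ θ₁ hP
  rw [mriD_eq_fromBlocks]
  exact (commute_fromBlocks_of_commute hA (Commute.zero_right S) hP hA).map
    (reindexAlgEquiv ℝ ℝ finSumFinEquiv)

theorem blockDiag2_mulVec_mriB (θ₁ : ℝ) (hv : S *ᵥ zAxis = zAxis) :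
    blockDiag2 S *ᵥ mriB θ₁ = mriB θ₁ := by
  rw [mriB_eq_append, blockDiag2_mulVec_append, mulVec_smul, mulVec_neg, hv]

theorem mriF_blockDiag2_mulVec (θ₁ θ₂ : ℝ) (hdet : IsUnit S.det) (hv : S *ᵥ zAxis = zAxis)
    (hw : zAxis ᵥ* S = zAxis) (x : Fin 6 → ℝ) (U : Matrix (Fin 3) (Fin 3) ℝ) :
    mriF θ₁ θ₂ (blockDiag2 S *ᵥ x) (S * U * S⁻¹) = blockDiag2 S *ᵥ mriF θ₁ θ₂ x U := by
  have hM : blockDiag2 (S * U * S⁻¹) * mriD θ₁ θ₂ * blockDiag2 S =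
      blockDiag2 S * (blockDiag2 U * mriD θ₁ θ₂) := calc
    _ = blockDiag2 (S * U * S⁻¹) * blockDiag2 S * mriD θ₁ θ₂ := by
      rw [Matrix.mul_assoc _ (mriD θ₁ θ₂), ← (commute_blockDiag2_mriD θ₁ θ₂ hv hw).eq,
        ← Matrix.mul_assoc]
    _ = blockDiag2 (S * U) * mriD θ₁ θ₂ := by
      rw [← blockDiag2_mul, nonsing_inv_mul_cancel_right _ _ hdet]
    _ = blockDiag2 S * (blockDiag2 U * mriD θ₁ θ₂) := by
      rw [blockDiag2_mul, Matrix.mul_assoc]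
  rw [mriF, mriF, mulVec_add, blockDiag2_mulVec_mriB θ₁ hv, mulVec_mulVec, mulVec_mulVec, hM]

theorem mriG_blockDiag2_mulVec (γ : ℝ) (hS : S ∈ orthogonalGroup (Fin 3) ℝ)
    (hw : zAxis ᵥ* S = zAxis) (x : Fin 6 → ℝ) : mriG γ (blockDiag2 S *ᵥ x) = mriG γ x := by
  obtain ⟨v, w, rfl⟩ : ∃ v w : Fin 3 → ℝ, x = Fin.append v w :=
    ⟨_, _, (Fin.append_castAdd_natAdd (m := 3) (n := 3) (f := x)).symm⟩
  rw [blockDiag2_mulVec_append, mriG_append, mriG_append,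
    mulVec_dotProduct_mulVec_of_mem_orthogonalGroup hS, dotProduct_mulVec, hw]

theorem mri_rotational_symmetry_general (θ₁ θ₂ : ℝ) {γ : ℝ} (_hγ : γ ≠ 0)
    (hS : S ∈ orthogonalGroup (Fin 3) ℝ) (hv : S *ᵥ zAxis = zAxis)
    (x : Fin 6 → ℝ) (U : Matrix (Fin 3) (Fin 3) ℝ) :
    mriF θ₁ θ₂ (blockDiag2 S *ᵥ x) (S * U * S⁻¹) = blockDiag2 S *ᵥ mriF θ₁ θ₂ x U ∧
      mriG γ (blockDiag2 S *ᵥ x) = mriG γ x := by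
  have hdet : IsUnit S.det := isUnit_det_of_left_inverse ((mem_orthogonalGroup_iff' _ _).mp hS)
  have hw : zAxis ᵥ* S = zAxis := vecMul_eq_self_of_mem_orthogonalGroup hS hv
  exact ⟨mriF_blockDiag2_mulVec θ₁ θ₂ hdet hv hw x U, mriG_blockDiag2_mulVec γ hS hw x⟩

end Symmetry

theorem rotZ_mem_orthogonalGroup (α : ℝ) : rotZ α ∈ orthogonalGroup (Fin 3) ℝ := by
  rw [mem_orthogonalGroup_iff]
  ext i j
  fin_cases i <;> fin_cases j <;>
    simp [rotZ, mul_apply, Fin.sum_univ_three, ← sq, mul_comm]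

theorem rotZ_mulVec_zAxis (α : ℝ) : rotZ α *ᵥ zAxis = zAxis := by
  ext i
  fin_cases i <;> simp [rotZ, zAxis]

/-- Rotational symmetry of the MR fingerprinting model: for all
`α ∈ ℝ`, `x ∈ ℝ⁶` and 3×3 matrices `U`,
`f(Φ_α x, R_α U R_α⁻¹) = Φ_α f(x, U)` and `g(Φ_α x) = g(x)`. -/
theorem mri_rotational_symmetry
    (θ₁ θ₂ γ : ℝ) (hγ : 0 < γ) :
    ∀ (α : ℝ) (x : Fin 6 → ℝ) (U : Matrix (Fin 3) (Fin 3) ℝ),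
      mriF θ₁ θ₂ ((mriPhi α).mulVec x) (rotZ α * U * (rotZ α)⁻¹)
          = (mriPhi α).mulVec (mriF θ₁ θ₂ x U) ∧
        mriG γ ((mriPhi α).mulVec x) = mriG γ x :=
  fun α => mri_rotational_symmetry_general θ₁ θ₂ hγ.ne' (rotZ_mem_orthogonalGroup α)
    (rotZ_mulVec_zAxis α)
end
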